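/- Let Γ be a distance-regular graph with classical parameters (D, b, α, β), D ≥ 4, and intersection numbers a₁ = 0 and a₂ ≠ 0. Suppose s t u z w is a pentagon in Γ, where s, u ∈ Γ₃(x) and z ∈ Γ₂(x) for some vertex x. Then for every v ∈ B(x,u) one has ∂(v,s) ≠ 2. -/

import Mathlib

/-!
Common definitions: distance-regular graphs (via an intersection-number function `p`),
classical parameters, and the sets `B(x,y)`, `A(x,y)`, `C(x,y)`.
The distance `∂` is `SimpleGraph.dist`.
-/

variable {V : Type*}

/-- `Γ` is distance-regular with intersection numbers `p h i j = p^h_{ij}`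
(for indices up to the diameter `D`). -/
def SimpleGraph.IsDistRegularWith (G : SimpleGraph V) (D : ℕ) (p : ℕ → ℕ → ℕ → ℕ) : Prop :=
  ∀ h i j : ℕ, h ≤ D → i ≤ D → j ≤ D → ∀ x y : V, G.dist x y = h →
    {z : V | G.dist x z = i ∧ G.dist y z = j}.ncard = p h i j

/-- The Gaussian bracket `[i] = 1 + b + b² + ⋯ + b^{i-1}`. -/
def gaussBracket (b : ℝ) (i : ℕ) : ℝ := ∑ k ∈ Finset.range i, b ^ k

/-- A distance-regular graph with intersection numbers `p` has classical parameters
`(D, b, α, β)`: `b ∉ {0, -1}`, `c_i = [i](1 + α[i-1])` and `b_i = ([D]-[i])(β - α[i])`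
for `0 ≤ i ≤ D`, where `c_i = p^i_{1,i-1}` and `b_i = p^i_{1,i+1}`. -/
def HasClassicalParams (D : ℕ) (p : ℕ → ℕ → ℕ → ℕ) (b α β : ℝ) : Prop :=
  b ≠ 0 ∧ b ≠ -1 ∧
    (∀ i ≤ D, (p i 1 (i - 1) : ℝ) = gaussBracket b i * (1 + α * gaussBracket b (i - 1))) ∧
    (∀ i ≤ D, (p i 1 (i + 1) : ℝ) =
      (gaussBracket b D - gaussBracket b i) * (β - α * gaussBracket b i))

/-- `B(x,y) = Γ₁(x) ∩ Γ_{∂(x,y)+1}(y)`. -/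
def Bset (G : SimpleGraph V) (x y : V) : Set V :=
  {v | G.dist x v = 1 ∧ G.dist y v = G.dist x y + 1}

/-- `A(x,y) = Γ₁(x) ∩ Γ_{∂(x,y)}(y)`. -/
def Aset (G : SimpleGraph V) (x y : V) : Set V :=
  {v | G.dist x v = 1 ∧ G.dist y v = G.dist x y}

/-- `C(x,y) = Γ₁(x) ∩ Γ_{∂(x,y)-1}(y)`. -/
def Cset (G : SimpleGraph V) (x y : V) : Set V :=
  {v | G.dist x v = 1 ∧ G.dist y v = G.dist x y - 1}

/-!
Since `a₁ = 0` and `a₂ ≠ 0`, the inequality `c₃ ≤ c₄` forces `b < 0`. Let `θ*₀, θ*₁, …` be the dual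
eigenvalue sequence of the eigenvalue `θ = b₁ / b - 1`, which is affine in `b⁻ⁱ`. The matrix `E`
with entries `θ*_{∂(x,y)}` satisfies `A E = θ E` for the adjacency matrix `A`, so it is a multiple
of the projection onto an eigenspace, hence positive semidefinite.

Given `x`, `y` at distance `2` or `3`, put `S = Γ₁(x) ∩ Γ₂(y)`, `T = Γ₁(y) ∩ Γ₂(x)`, and evaluate
the quadratic form of `E` on `w = 1_S - 1_T - κ (1_x - 1_y)`, where `κ` makes `E w` vanish at `x`
and `y`. When `∂(x,y) = 3`, the value is a negative multiple of the number of pairs of `S × T` at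
distance `2`, so there are none. When `∂(x,y) = 2`, it is a multiple of the number of pairs at
distance `3`, and there are none by the previous case, so `E w = 0`. This is Terwilliger's balanced
set condition.

If now `∂(v,x) = ∂(x,y) = 2` and `∂(v,y) = 4`, the entry of `E w` at `v` compares the values of `θ*`
on `S` with those on `T`. As `θ*₃` is less than `θ*₂` and `θ*₄`, it forces `T ⊆ Γ₄(v)`.
-/

open Finset Matrix

section SphereInter

/-- The finite set `Γ_i(x) ∩ Γ_j(y)`, whose size is the intersection number `p^h_{ij}` when
`∂(x,y) = h`. -/
noncomputable def sphereInter [Fintype V] (G : SimpleGraph V) (x y : V) (i j : ℕ) : Finset V :=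
  {z | G.dist x z = i ∧ G.dist y z = j}

variable {G : SimpleGraph V} {D : ℕ} {p : ℕ → ℕ → ℕ → ℕ} {h i j : ℕ} {x y z : V}

lemma exists_adj_dist_eq_of_dist_eq_succ {n : ℕ} (hxy : G.dist x y = n + 1) :
    ∃ x', G.Adj x x' ∧ G.dist x' y = n := by
  obtain ⟨q, hq⟩ := SimpleGraph.exists_walk_of_dist_ne_zero (G := G) (u := x) (v := y) (by omega)
  cases q with
  | nil => simp at hxy
  | @cons _ x' _ hadj q' =>
    refine ⟨x', hadj, ?_⟩
    have hle : G.dist x' y ≤ q'.length := SimpleGraph.dist_le q'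
    have hdiff := hadj.diff_dist_adj (u := y)
    simp only [SimpleGraph.Walk.length_cons, G.dist_comm (u := y)] at hq hdiff
    omega

lemma exists_dist_eq_of_le_dist {n : ℕ} (hn : n ≤ G.dist x y) : ∃ x', G.dist x' y = n := by
  induction hm : G.dist x y generalizing x with
  | zero => exact ⟨x, by omega⟩
  | succ m ih =>
    rcases hn.eq_or_lt with rfl | hlt
    · exact ⟨x, rfl⟩
    · obtain ⟨x', -, hx'⟩ := exists_adj_dist_eq_of_dist_eq_succ hm
      exact ih (by omega) hx'

lemma mem_sphereInter [Fintype V] :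
    z ∈ sphereInter G x y i j ↔ G.dist x z = i ∧ G.dist y z = j := by
  simp [sphereInter]

lemma card_sphereInter [Fintype V] (hdr : G.IsDistRegularWith D p) (hxy : G.dist x y = h)
    (hh : h ≤ D) (hi : i ≤ D) (hj : j ≤ D) : #(sphereInter G x y i j) = p h i j := by
  rw [← hdr h i j hh hi hj x y hxy, ← Set.ncard_coe_finset]
  simp [sphereInter]

lemma card_sphereInter_swap [Fintype V] (hdr : G.IsDistRegularWith D p) (hD : 2 ≤ D)
    (hdiam : ∀ x y, G.dist x y ≤ D) (x y : V) :
    #(sphereInter G y x 1 2) = #(sphereInter G x y 1 2) := by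
  rw [card_sphereInter hdr rfl (hdiam x y) (by omega) hD,
    card_sphereInter hdr G.dist_comm (hdiam x y) (by omega) hD]

lemma sphereInter_self_one_one [Fintype V] [DecidableRel G.Adj] :
    sphereInter G x x 1 1 = G.neighborFinset x := by
  ext z
  simp [mem_sphereInter]

lemma dist_eq_or_eq_of_mem_sphereInter_near [Fintype V] {v s : V} (hconn : G.Connected)
    (hvy : G.dist v y = G.dist v x + 2) (hs : s ∈ sphereInter G x y 1 2) :
    G.dist v s = G.dist v x ∨ G.dist v s = G.dist v x + 1 := by
  obtain ⟨hxs, hys⟩ := mem_sphereInter.1 hs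
  have hupper := hconn.dist_triangle (u := v) (v := x) (w := s)
  have hlower := hconn.dist_triangle (u := v) (v := s) (w := y)
  rw [G.dist_comm (u := s)] at hlower
  omega

lemma dist_eq_or_eq_of_mem_sphereInter_far [Fintype V] {v t : V} (hconn : G.Connected)
    (hvy : G.dist v y = G.dist v x + 2) (ht : t ∈ sphereInter G y x 1 2) :
    G.dist v t = G.dist v x + 1 ∨ G.dist v t = G.dist v x + 2 := by
  obtain ⟨hyt, hxt⟩ := mem_sphereInter.1 ht
  have hupper := hconn.dist_triangle (u := v) (v := x) (w := t)
  have hlower := hconn.dist_triangle (u := v) (v := t) (w := y)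
  rw [G.dist_comm (u := t)] at hlower
  omega

lemma intersectionNumber_c_le_succ [Finite V] (hconn : G.Connected)
    (hdr : G.IsDistRegularWith D p) (hxy : G.dist x y = i + 1) (hi : i < D) :
    p i 1 (i - 1) ≤ p (i + 1) 1 i := by
  have := Fintype.ofFinite V
  obtain ⟨x', hadj, hx'y⟩ := exists_adj_dist_eq_of_dist_eq_succ hxy
  rw [← SimpleGraph.dist_eq_one_iff_adj] at hadj
  rw [G.dist_comm] at hxy hx'y
  rw [← card_sphereInter hdr hx'y (by omega) (by omega) (by omega),
    ← card_sphereInter hdr hxy (by omega) (by omega) (by omega)]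
  refine card_le_card fun z hz ↦ ?_
  rw [mem_sphereInter] at hz ⊢
  have h₁ := hconn.dist_triangle (u := y) (v := x') (w := z)
  have h₂ := hconn.dist_triangle (u := x) (v := x') (w := z)
  have h₃ := hconn.dist_triangle (u := y) (v := z) (w := x)
  rw [G.dist_comm (u := z)] at h₃
  omega

lemma intersectionNumber_c_add_a_add_b [Finite V] (hdr : G.IsDistRegularWith D p)
    (hxy : G.dist x y = i) (hi₀ : 0 < i) (hi : i < D) :
    p i 1 (i - 1) + p i 1 i + p i 1 (i + 1) = p 0 1 1 := by
  have := Fintype.ofFinite V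
  have hfiber (j : ℕ) :
      #{z ∈ sphereInter G x x 1 1 | G.dist y z = j} = #(sphereInter G x y 1 j) := by
    congr 1
    ext z
    simp [mem_sphereInter]
  have hmaps : ∀ z ∈ sphereInter G x x 1 1, G.dist y z ∈ ({i - 1, i, i + 1} : Finset ℕ) := by
    intro z hz
    have hadj := SimpleGraph.dist_eq_one_iff_adj.1 (mem_sphereInter.1 hz).1
    have hdiff := hadj.diff_dist_adj (u := y)
    rw [G.dist_comm (u := y) (v := x), hxy] at hdiff
    simp only [mem_insert, mem_singleton]
    tauto
  rw [← card_sphereInter hdr (G.dist_self (v := x)) (by omega) (by omega) (by omega),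
    card_eq_sum_card_fiberwise hmaps, sum_insert (by simp; omega), sum_insert (by simp),
    sum_singleton, hfiber, hfiber, hfiber,
    card_sphereInter hdr hxy (by omega) (by omega) (by omega),
    card_sphereInter hdr hxy (by omega) (by omega) (by omega),
    card_sphereInter hdr hxy (by omega) (by omega) (by omega), add_assoc]

lemma sum_neighborFinset_dist_sub [Fintype V] [DecidableRel G.Adj] (f : ℕ → ℝ)
    (hxy : G.dist x y = i) :
    ∑ z ∈ G.neighborFinset x, (f (G.dist z y) - f i) =
      #(sphereInter G x y 1 (i - 1)) * (f (i - 1) - f i) +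
        #(sphereInter G x y 1 (i + 1)) * (f (i + 1) - f i) := by
  have hterm : ∀ z ∈ G.neighborFinset x, f (G.dist z y) - f i =
      (if G.dist y z = i - 1 then f (i - 1) - f i else 0) +
        (if G.dist y z = i + 1 then f (i + 1) - f i else 0) := by
    intro z hz
    have hdiff := ((G.mem_neighborFinset x z).1 hz).diff_dist_adj (u := y)
    rw [G.dist_comm (u := y) (v := x), hxy] at hdiff
    rw [G.dist_comm (u := z)]
    rcases hdiff with hd | hd | hd <;> rw [hd] <;> split_ifs <;> grind
  have hfiber (j : ℕ) : {z ∈ G.neighborFinset x | G.dist y z = j} = sphereInter G x y 1 j := by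
    ext z
    simp [mem_sphereInter]
  rw [sum_congr rfl hterm, sum_add_distrib, ← sum_filter, ← sum_filter, hfiber, hfiber,
    sum_const, sum_const, nsmul_eq_mul, nsmul_eq_mul]

end SphereInter

section DistMatrix

/-- The matrix with entries `f (∂(x,y))`. For a distance-regular graph these matrices form the
Bose–Mesner algebra. -/
noncomputable def distMatrix (G : SimpleGraph V) (f : ℕ → ℝ) : Matrix V V ℝ :=
  of fun x y ↦ f (G.dist x y)

variable {G : SimpleGraph V} {D : ℕ} {p : ℕ → ℕ → ℕ → ℕ}

lemma distMatrix_apply (f : ℕ → ℝ) (x y : V) : distMatrix G f x y = f (G.dist x y) := rfl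

lemma isHermitian_distMatrix (f : ℕ → ℝ) : (distMatrix G f).IsHermitian := by
  ext x y
  simp [distMatrix_apply, G.dist_comm]

variable [Fintype V]

lemma distMatrix_mul_distMatrix (hdr : G.IsDistRegularWith D p) (hdiam : ∀ x y, G.dist x y ≤ D)
    (f g : ℕ → ℝ) : distMatrix G f * distMatrix G g = distMatrix G fun h ↦
      ∑ ij ∈ range (D + 1) ×ˢ range (D + 1), p h ij.1 ij.2 * (f ij.1 * g ij.2) := by
  ext x y
  have hmaps : ∀ z ∈ (univ : Finset V),
      (G.dist x z, G.dist y z) ∈ range (D + 1) ×ˢ range (D + 1) := by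
    simp [Order.lt_add_one_iff, hdiam]
  simp only [mul_apply, distMatrix_apply, G.dist_comm (v := y)]
  rw [G.dist_comm (u := y), ← sum_fiberwise_of_maps_to' hmaps fun ij ↦ f ij.1 * g ij.2]
  refine sum_congr rfl fun ij hij ↦ ?_
  simp only [mem_product, mem_range, Order.lt_add_one_iff] at hij
  rw [sum_const, nsmul_eq_mul, ← card_sphereInter hdr rfl (hdiam x y) hij.1 hij.2]
  simp [sphereInter, Prod.ext_iff]

variable [DecidableRel G.Adj]

lemma distMatrix_eq_zero_of_adjMatrix_mul_eq_smul {f : ℕ → ℝ} {θ : ℝ}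
    (hf : G.adjMatrix ℝ * distMatrix G f = θ • distMatrix G f) (hf₀ : f 0 = 0) :
    distMatrix G f = 0 := by
  suffices hzero : ∀ n x y, G.dist x y = n → f n = 0 by
    ext x y
    exact hzero _ x y rfl
  intro n
  induction n using Nat.strong_induction_on with
  | _ n ih =>
    intro x y hxy
    rcases n with _ | n
    · exact hf₀
    obtain ⟨x', hadj, hx'y⟩ := exists_adj_dist_eq_of_dist_eq_succ hxy
    have hsum : ∑ z ∈ G.neighborFinset x', f (G.dist z y) = 0 := by
      have hentry := congrFun₂ hf x' y
      rwa [SimpleGraph.adjMatrix_mul_apply, Matrix.smul_apply, distMatrix_apply, hx'y,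
        ih n n.lt_succ_self x' y hx'y, smul_zero] at hentry
    have hterm : ∀ z ∈ G.neighborFinset x',
        f (G.dist z y) = if G.dist z y = n + 1 then f (n + 1) else 0 := by
      intro z hz
      have hdiff := ((G.mem_neighborFinset x' z).1 hz).diff_dist_adj (u := y)
      rw [G.dist_comm (u := y), G.dist_comm (u := y), hx'y] at hdiff
      split_ifs with hzy
      · rw [hzy]
      · exact ih _ (by omega) z y rfl
    rw [sum_congr rfl hterm, ← sum_filter, sum_const, smul_eq_zero, card_eq_zero] at hsum
    refine hsum.resolve_left (ne_empty_of_mem (a := x) ?_)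
    simp [hadj.symm, hxy]

theorem posSemidef_distMatrix_of_adjMatrix_mul_eq_smul (hconn : G.Connected)
    (hdr : G.IsDistRegularWith D p) (hdiam : ∀ x y, G.dist x y ≤ D) {e : ℕ → ℝ} {θ : ℝ}
    (he : G.adjMatrix ℝ * distMatrix G e = θ • distMatrix G e) (he₀ : 0 ≤ e 0) :
    (distMatrix G e).PosSemidef := by
  rcases he₀.eq_or_lt with he₀ | he₀
  · rw [distMatrix_eq_zero_of_adjMatrix_mul_eq_smul he he₀.symm]
    exact .zero
  obtain ⟨f, hf⟩ : ∃ f, distMatrix G e * distMatrix G e = distMatrix G f :=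
    ⟨_, distMatrix_mul_distMatrix hdr hdiam e e⟩
  have hsub : distMatrix G (fun i ↦ e 0 * f i - f 0 * e i) =
      e 0 • distMatrix G f - f 0 • distMatrix G e := by
    ext x y
    simp [distMatrix_apply]
  have hprop : e 0 • distMatrix G f = f 0 • distMatrix G e := by
    rw [← sub_eq_zero, ← hsub]
    refine distMatrix_eq_zero_of_adjMatrix_mul_eq_smul (θ := θ) ?_ (by ring)
    rw [hsub, ← hf, mul_sub, mul_smul_comm, mul_smul_comm, ← Matrix.mul_assoc, he, smul_sub,
      Matrix.smul_mul, smul_comm (e 0), smul_comm (f 0)]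
  have hf₀ : 0 < f 0 := by
    obtain ⟨x⟩ := hconn.nonempty
    have hdiag : f 0 = ∑ z, e (G.dist x z) * e (G.dist x z) := by
      simpa [mul_apply, distMatrix_apply, G.dist_comm (v := x)] using (congrFun₂ hf x x).symm
    rw [hdiag]
    exact sum_pos' (fun z _ ↦ mul_self_nonneg _) ⟨x, mem_univ x, by simpa using he₀.ne'⟩
  have hsq : distMatrix G e = (e 0 / f 0) • ((distMatrix G e)ᴴ * distMatrix G e) := by
    rw [(isHermitian_distMatrix e).eq, hf, div_eq_inv_mul, mul_smul, hprop, inv_smul_smul₀ hf₀.ne']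
  rw [hsq]
  exact (posSemidef_conjTranspose_mul_self _).smul (by positivity)

end DistMatrix

section ClassicalParams

variable {b : ℝ}

lemma gaussBracket_zero (b : ℝ) : gaussBracket b 0 = 0 := by
  simp [gaussBracket]

lemma gaussBracket_succ (b : ℝ) (i : ℕ) : gaussBracket b (i + 1) = b * gaussBracket b i + 1 :=
  geom_sum_succ

lemma gaussBracket_mul_sub_one (b : ℝ) (i : ℕ) : gaussBracket b i * (b - 1) = b ^ i - 1 :=
  geom_sum_mul b i

/-- The coefficient of `b⁻ⁱ` in `dualEigenvalue D b α β i`. -/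
noncomputable def dualEigenvalueSlope (D : ℕ) (b α β : ℝ) : ℝ :=
  (gaussBracket b D - 1) * (β - α) - b - b * gaussBracket b D * β

/-- A multiple of the dual eigenvalue sequence associated with the eigenvalue `b₁ / b - 1` of a
graph with classical parameters `(D, b, α, β)`. The scaling avoids division by an expression in the
parameters, and is by a positive factor when `b < 0`. -/
noncomputable def dualEigenvalue (D : ℕ) (b α β : ℝ) (i : ℕ) : ℝ :=
  b - α + β + α * gaussBracket b D + dualEigenvalueSlope D b α β * b⁻¹ ^ i

lemma dualEigenvalue_sub_dualEigenvalue (D : ℕ) (b α β : ℝ) (i j : ℕ) :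
    dualEigenvalue D b α β i - dualEigenvalue D b α β j =
      dualEigenvalueSlope D b α β * (b⁻¹ ^ i - b⁻¹ ^ j) := by
  simp only [dualEigenvalue]
  ring

lemma dualEigenvalue_zero (D : ℕ) (b α β : ℝ) :
    dualEigenvalue D b α β 0 = (1 - b) * (gaussBracket b D * β) := by
  simp only [dualEigenvalue, dualEigenvalueSlope]
  ring

lemma pow_mul_dualEigenvalue (hb : b ≠ 0) (D : ℕ) (α β : ℝ) (i : ℕ) :
    b ^ i * dualEigenvalue D b α β i =
      (b - 1) * (b * (gaussBracket b i * (1 + α * gaussBracket b (i - 1))) -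
        (gaussBracket b D - gaussBracket b i) * (β - α * gaussBracket b i)) := by
  have hpow : b ^ i * b⁻¹ ^ i = 1 := by rw [← mul_pow, mul_inv_cancel₀ hb, one_pow]
  have hbracket := gaussBracket_mul_sub_one b i
  have hsum : b ^ i * dualEigenvalue D b α β i =
      b ^ i * (b - α + β + α * gaussBracket b D) + dualEigenvalueSlope D b α β := by
    rw [dualEigenvalue, mul_add, mul_left_comm, hpow, mul_one]
  rw [hsum, eq_add_of_sub_eq hbracket.symm, dualEigenvalueSlope]
  rcases i with _ | i
  · rw [gaussBracket_zero]
    ring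
  · rw [Nat.add_sub_cancel, gaussBracket_succ]
    ring

lemma dualEigenvalue_recurrence (hb : b ≠ 0) (D : ℕ) (α β : ℝ) (i : ℕ) :
    gaussBracket b i * (1 + α * gaussBracket b (i - 1)) *
        (dualEigenvalue D b α β (i - 1) - dualEigenvalue D b α β i) +
      (gaussBracket b D - gaussBracket b i) * (β - α * gaussBracket b i) *
        (dualEigenvalue D b α β (i + 1) - dualEigenvalue D b α β i) =
    ((gaussBracket b D - 1) * (β - α) / b - 1 - gaussBracket b D * β) *
      dualEigenvalue D b α β i := by
  have hdown : gaussBracket b i * (b⁻¹ ^ (i - 1) - b⁻¹ ^ i) =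
      gaussBracket b i * (b⁻¹ ^ i * (b - 1)) := by
    rcases i with _ | i
    · simp [gaussBracket_zero]
    · rw [Nat.add_sub_cancel, pow_succ]
      field_simp
  have hup : b⁻¹ ^ (i + 1) - b⁻¹ ^ i = -(b⁻¹ ^ i * (b - 1) / b) := by
    rw [pow_succ]
    field_simp
    ring
  have hslope : (gaussBracket b D - 1) * (β - α) / b - 1 - gaussBracket b D * β =
      dualEigenvalueSlope D b α β / b := by
    rw [dualEigenvalueSlope]
    field_simp
  have hvalue : dualEigenvalue D b α β i = b⁻¹ ^ i * (b ^ i * dualEigenvalue D b α β i) := by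
    rw [← mul_assoc, ← mul_pow, inv_mul_cancel₀ hb, one_pow, one_mul]
  rw [dualEigenvalue_sub_dualEigenvalue, dualEigenvalue_sub_dualEigenvalue, hup, hslope, hvalue,
    pow_mul_dualEigenvalue hb]
  linear_combination (norm := skip) dualEigenvalueSlope D b α β *
    (1 + α * gaussBracket b (i - 1)) * hdown
  field_simp
  ring

namespace HasClassicalParams

variable {G : SimpleGraph V} {D : ℕ} {p : ℕ → ℕ → ℕ → ℕ} {α β : ℝ}

lemma intersectionNumber_c_one (hcp : HasClassicalParams D p b α β) (hD : 1 ≤ D) :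
    (p 1 1 0 : ℝ) = 1 := by
  simpa [gaussBracket_succ, gaussBracket_zero] using hcp.2.2.1 1 hD

lemma intersectionNumber_c_two (hcp : HasClassicalParams D p b α β) (hD : 2 ≤ D) :
    (p 2 1 1 : ℝ) = (1 + b) * (1 + α) := by
  rw [hcp.2.2.1 2 hD]
  simp [gaussBracket_succ, gaussBracket_zero, add_comm]

lemma intersectionNumber_c_three (hcp : HasClassicalParams D p b α β) (hD : 3 ≤ D) :
    (p 3 1 2 : ℝ) = (1 + b + b ^ 2) * (1 + α * (1 + b)) := by
  rw [hcp.2.2.1 3 hD]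
  simp only [gaussBracket_succ, gaussBracket_zero, Nat.add_one_sub_one]
  ring

lemma intersectionNumber_c_four (hcp : HasClassicalParams D p b α β) (hD : 4 ≤ D) :
    (p 4 1 3 : ℝ) = (1 + b + b ^ 2 + b ^ 3) * (1 + α * (1 + b + b ^ 2)) := by
  rw [hcp.2.2.1 4 hD]
  simp only [gaussBracket_succ, gaussBracket_zero, Nat.add_one_sub_one]
  ring

lemma intersectionNumber_b_zero (hcp : HasClassicalParams D p b α β) :
    (p 0 1 1 : ℝ) = gaussBracket b D * β := by
  rw [hcp.2.2.2 0 (by omega), gaussBracket_zero]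
  ring

lemma intersectionNumber_b_one (hcp : HasClassicalParams D p b α β) (hD : 1 ≤ D) :
    (p 1 1 2 : ℝ) = (gaussBracket b D - 1) * (β - α) := by
  simpa [gaussBracket_succ, gaussBracket_zero] using hcp.2.2.2 1 hD

lemma adjMatrix_mul_distMatrix_dualEigenvalue [Fintype V] [DecidableRel G.Adj]
    (hcp : HasClassicalParams D p b α β) (hD : 0 < D) (hdr : G.IsDistRegularWith D p)
    (hdiam : ∀ x y, G.dist x y ≤ D) :
    G.adjMatrix ℝ * distMatrix G (dualEigenvalue D b α β) =
      ((gaussBracket b D - 1) * (β - α) / b - 1) • distMatrix G (dualEigenvalue D b α β) := by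
  have hvalency (x : V) : (#(G.neighborFinset x) : ℝ) = gaussBracket b D * β := by
    rw [← sphereInter_self_one_one, card_sphereInter hdr G.dist_self (by omega) hD hD,
      hcp.intersectionNumber_b_zero]
  ext x y
  have hupper : (#(sphereInter G x y 1 (G.dist x y + 1)) : ℝ) =
      (gaussBracket b D - gaussBracket b (G.dist x y)) *
        (β - α * gaussBracket b (G.dist x y)) := by
    rcases (hdiam x y).lt_or_eq with hlt | heq
    · rw [card_sphereInter hdr rfl hlt.le hD hlt, hcp.2.2.2 _ hlt.le]
    · have hempty : sphereInter G x y 1 (D + 1) = ∅ := by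
        refine eq_empty_of_forall_notMem fun z hz ↦ ?_
        have := hdiam y z
        grind [mem_sphereInter]
      simp [heq, hempty]
  have hsub := sum_neighborFinset_dist_sub (G := G) (dualEigenvalue D b α β) (x := x) (y := y) rfl
  rw [sum_sub_distrib, sum_const, nsmul_eq_mul, hvalency, hupper,
    card_sphereInter hdr rfl (hdiam x y) hD ((Nat.sub_le _ _).trans (hdiam x y)),
    hcp.2.2.1 _ (hdiam x y), dualEigenvalue_recurrence hcp.1] at hsub
  rw [SimpleGraph.adjMatrix_mul_apply, Matrix.smul_apply, smul_eq_mul]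
  simp only [distMatrix_apply]
  linear_combination hsub

theorem posSemidef_distMatrix_dualEigenvalue [Finite V] (hcp : HasClassicalParams D p b α β)
    (hD : 0 < D) (hconn : G.Connected) (hdr : G.IsDistRegularWith D p)
    (hdiam : ∀ x y, G.dist x y ≤ D) (hb : b < 0) :
    (distMatrix G (dualEigenvalue D b α β)).PosSemidef := by
  classical
  have := Fintype.ofFinite V
  refine posSemidef_distMatrix_of_adjMatrix_mul_eq_smul hconn hdr hdiam
    (hcp.adjMatrix_mul_distMatrix_dualEigenvalue hD hdr hdiam) ?_
  rw [dualEigenvalue_zero, ← hcp.intersectionNumber_b_zero]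
  exact mul_nonneg (by linarith) (Nat.cast_nonneg _)

lemma beta_eq_of_intersectionNumber_a_one_eq_zero [Finite V] {x y : V}
    (hcp : HasClassicalParams D p b α β) (hdr : G.IsDistRegularWith D p) (ha₁ : p 1 1 1 = 0)
    (hD : 1 < D) (hxy : G.dist x y = 1) : β = 1 + α - α * gaussBracket b D := by
  have hvalency := intersectionNumber_c_add_a_add_b hdr hxy one_pos hD
  rify at hvalency
  rw [hcp.intersectionNumber_c_one hD.le, hcp.intersectionNumber_b_one hD.le,
    hcp.intersectionNumber_b_zero, ha₁] at hvalency
  push_cast at hvalency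
  linear_combination -hvalency

lemma intersectionNumber_a_two [Finite V] {x y : V} (hcp : HasClassicalParams D p b α β)
    (hdr : G.IsDistRegularWith D p) (ha₁ : p 1 1 1 = 0) (hD : 2 < D) (hxy : G.dist x y = 2) :
    (p 2 1 2 : ℝ) = -α * (1 + b) ^ 2 := by
  obtain ⟨x', hx'⟩ := exists_dist_eq_of_le_dist (G := G) (x := x) (y := y) (n := 1) (by omega)
  have hβ := hcp.beta_eq_of_intersectionNumber_a_one_eq_zero hdr ha₁ (by omega) hx'
  have hb₂ : (p 2 1 3 : ℝ) = (gaussBracket b D - (1 + b)) * (β - α * (1 + b)) := by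
    rw [hcp.2.2.2 2 hD.le]
    simp [gaussBracket_succ, gaussBracket_zero, add_comm]
  have hvalency := intersectionNumber_c_add_a_add_b hdr hxy two_pos hD
  rify at hvalency
  rw [hcp.intersectionNumber_c_two hD.le, hb₂, hcp.intersectionNumber_b_zero] at hvalency
  linear_combination hvalency + (1 + b) * hβ

lemma base_neg [Finite V] {x y : V} (hcp : HasClassicalParams D p b α β) (hconn : G.Connected)
    (hdr : G.IsDistRegularWith D p) (ha₁ : p 1 1 1 = 0) (ha₂ : p 2 1 2 ≠ 0) (hD : 4 ≤ D)
    (hxy : G.dist x y = 4) : b < 0 := by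
  obtain ⟨x', hx'⟩ := exists_dist_eq_of_le_dist (G := G) (x := x) (y := y) (n := 2) (by omega)
  have ha₂' := hcp.intersectionNumber_a_two hdr ha₁ (by omega) hx'
  have ha₂_ge : (1 : ℝ) ≤ p 2 1 2 := by exact_mod_cast Nat.one_le_iff_ne_zero.2 ha₂
  have hc := intersectionNumber_c_le_succ hconn hdr hxy (by omega)
  rify at hc
  rw [hcp.intersectionNumber_c_three (by omega), hcp.intersectionNumber_c_four hD] at hc
  by_contra! hb
  have hb : 0 < b := hb.lt_of_ne' hcp.1
  have hdiff : 0 ≤ b ^ 2 * (b * (1 + b) - p 2 1 2 * (1 + b + b ^ 2)) := by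
    rw [ha₂']
    calc (0 : ℝ) ≤ (1 + b) * ((1 + b + b ^ 2 + b ^ 3) * (1 + α * (1 + b + b ^ 2)) -
            (1 + b + b ^ 2) * (1 + α * (1 + b))) := mul_nonneg (by positivity) (sub_nonneg.2 hc)
      _ = _ := by ring
  have hfactor := nonneg_of_mul_nonneg_right hdiff (by positivity)
  have hbound := mul_le_mul_of_nonneg_right ha₂_ge (by positivity : 0 ≤ 1 + b + b ^ 2)
  linarith

lemma dualEigenvalueSlope_pos (hcp : HasClassicalParams D p b α β) (hD : 1 ≤ D) (hb : b < 0) :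
    0 < dualEigenvalueSlope D b α β := by
  have hslope : dualEigenvalueSlope D b α β = p 1 1 2 - b - b * p 0 1 1 := by
    rw [hcp.intersectionNumber_b_one hD, hcp.intersectionNumber_b_zero, dualEigenvalueSlope]
    ring
  have hmul := mul_nonneg (neg_nonneg.2 hb.le) (Nat.cast_nonneg (α := ℝ) (p 0 1 1))
  have := Nat.cast_nonneg (α := ℝ) (p 1 1 2)
  linarith

lemma dualEigenvalue_lt_dualEigenvalue (hcp : HasClassicalParams D p b α β) (hD : 1 ≤ D)
    (hb : b < 0) {i j : ℕ} (hi : Odd i) (hj : Even j) :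
    dualEigenvalue D b α β i < dualEigenvalue D b α β j := by
  rw [← sub_pos, dualEigenvalue_sub_dualEigenvalue]
  refine mul_pos (hcp.dualEigenvalueSlope_pos hD hb) (sub_pos.2 ?_)
  exact (hi.pow_neg (inv_lt_zero.2 hb)).trans (hj.pow_pos (inv_ne_zero hcp.1))

end HasClassicalParams

end ClassicalParams

section TriangleFree

variable {G : SimpleGraph V} {D : ℕ} {p : ℕ → ℕ → ℕ → ℕ}

lemma cliqueFree_three_of_intersectionNumber_a_one_eq_zero [Finite V]
    (hdr : G.IsDistRegularWith D p) (hD : 1 ≤ D) (ha₁ : p 1 1 1 = 0) : G.CliqueFree 3 := by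
  classical
  have := Fintype.ofFinite V
  intro t ht
  obtain ⟨x, y, z, hxy, hxz, hyz, -⟩ := SimpleGraph.is3Clique_iff.1 ht
  rw [← SimpleGraph.dist_eq_one_iff_adj] at hxy hxz hyz
  have hempty := card_sphereInter hdr hxy hD hD hD
  rw [ha₁, card_eq_zero] at hempty
  exact notMem_empty z (hempty ▸ mem_sphereInter.2 ⟨hxz, hyz⟩)

lemma dist_eq_two_of_dist_eq_one_of_dist_eq_one (hconn : G.Connected) (htf : G.CliqueFree 3)
    {q x y : V} (hqx : G.dist q x = 1) (hqy : G.dist q y = 1) (hxy : x ≠ y) :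
    G.dist x y = 2 := by
  classical
  have hpos := hconn.pos_dist_of_ne hxy
  have htri := hconn.dist_triangle (u := x) (v := q) (w := y)
  rw [G.dist_comm (u := x) (v := q)] at htri
  have hne : G.dist x y ≠ 1 := by
    intro hadj
    rw [SimpleGraph.dist_eq_one_iff_adj] at hqx hqy hadj
    exact htf {q, x, y} (SimpleGraph.is3Clique_triple_iff.2 ⟨hqx, hqy, hadj⟩)
  omega

lemma sum_dist_of_forall_dist_eq_one (hconn : G.Connected) (htf : G.CliqueFree 3) (f : ℕ → ℝ)
    {P : Finset V} {q x : V} (hP : ∀ z ∈ P, G.dist q z = 1) (hx : x ∈ P) :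
    ∑ z ∈ P, f (G.dist x z) = f 0 + (#P - 1) * f 2 := by
  classical
  have hterm : ∀ z ∈ P.erase x, f (G.dist x z) = f 2 := by
    intro z hz
    obtain ⟨hzx, hzP⟩ := mem_erase.1 hz
    rw [dist_eq_two_of_dist_eq_one_of_dist_eq_one hconn htf (hP x hx) (hP z hzP) hzx.symm]
  rw [← add_sum_erase P _ hx, sum_congr rfl hterm, sum_const, nsmul_eq_mul, card_erase_of_mem hx,
    Nat.cast_pred (card_pos.2 ⟨x, hx⟩), G.dist_self]

variable [Fintype V] {x y a : V}

lemma sum_dist_sphereInter (hconn : G.Connected) (htf : G.CliqueFree 3)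
    (hdr : G.IsDistRegularWith D p) (hD : 2 ≤ D) (f : ℕ → ℝ) (hxy : 2 ≤ G.dist x y)
    (ha : a ∈ sphereInter G x y 1 2) :
    ∑ t ∈ sphereInter G y x 1 2, f (G.dist a t) = p 2 1 1 * f 1 +
      #{t ∈ sphereInter G y x 1 2 | G.dist a t = 2} * f 2 +
      #{t ∈ sphereInter G y x 1 2 | G.dist a t = 3} * f 3 := by
  obtain ⟨hxa, hya⟩ := mem_sphereInter.1 ha
  have hmaps : ∀ t ∈ sphereInter G y x 1 2, G.dist a t ∈ ({1, 2, 3} : Finset ℕ) := by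
    intro t ht
    obtain ⟨hyt, hxt⟩ := mem_sphereInter.1 ht
    have hupper := hconn.dist_triangle (u := a) (v := y) (w := t)
    have hlower := hconn.dist_triangle (u := x) (v := a) (w := t)
    rw [G.dist_comm (u := a) (v := y)] at hupper
    simp only [mem_insert, mem_singleton]
    omega
  have hadj : {t ∈ sphereInter G y x 1 2 | G.dist a t = 1} = sphereInter G a y 1 1 := by
    ext t
    simp only [mem_filter, mem_sphereInter]
    refine ⟨fun ⟨⟨hyt, _⟩, hat⟩ ↦ ⟨hat, hyt⟩, fun ⟨hat, hyt⟩ ↦ ⟨⟨hyt, ?_⟩, hat⟩⟩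
    have hne : x ≠ t := by
      rintro rfl
      rw [G.dist_comm] at hyt
      omega
    exact dist_eq_two_of_dist_eq_one_of_dist_eq_one hconn htf (G.dist_comm.trans hxa) hat hne
  rw [← sum_fiberwise_of_maps_to' hmaps f, sum_insert (by simp), sum_insert (by simp),
    sum_singleton, sum_const, sum_const, sum_const, nsmul_eq_mul, nsmul_eq_mul, nsmul_eq_mul,
    hadj, card_sphereInter hdr (G.dist_comm.trans hya) hD (by omega) (by omega), add_assoc]

end TriangleFree

section BalanceVec

variable [Fintype V] {G : SimpleGraph V} {D : ℕ} {p : ℕ → ℕ → ℕ → ℕ}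

/-- The vector `1_S - 1_T - κ (1_x - 1_y)`, where `S = Γ₁(x) ∩ Γ₂(y)` and `T = Γ₁(y) ∩ Γ₂(x)`. The
balanced set condition says that a suitable idempotent of the Bose–Mesner algebra kills it. -/
noncomputable def balanceVec [DecidableEq V] (G : SimpleGraph V) (x y : V) (κ : ℝ) : V → ℝ :=
  ∑ a ∈ sphereInter G x y 1 2, Pi.single a 1 - ∑ a ∈ sphereInter G y x 1 2, Pi.single a 1 -
    κ • (Pi.single x 1 - Pi.single y 1)

variable [DecidableEq V] {x y a : V} {κ : ℝ}

lemma balanceVec_dotProduct (x y : V) (κ : ℝ) (u : V → ℝ) :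
    balanceVec G x y κ ⬝ᵥ u = ∑ a ∈ sphereInter G x y 1 2, u a -
      ∑ a ∈ sphereInter G y x 1 2, u a - κ * (u x - u y) := by
  simp only [balanceVec, sub_dotProduct, sum_dotProduct, smul_dotProduct, single_one_dotProduct,
    smul_eq_mul]

lemma balanceVec_swap (x y : V) (κ : ℝ) : balanceVec G y x κ = -balanceVec G x y κ := by
  simp only [balanceVec, smul_sub]
  abel

lemma distMatrix_mulVec_balanceVec_apply (f : ℕ → ℝ) (x y v : V) (κ : ℝ) :
    (distMatrix G f *ᵥ balanceVec G x y κ) v = ∑ a ∈ sphereInter G x y 1 2, f (G.dist v a) -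
      ∑ a ∈ sphereInter G y x 1 2, f (G.dist v a) - κ * (f (G.dist v x) - f (G.dist v y)) := by
  rw [mulVec, dotProduct_comm, balanceVec_dotProduct]
  rfl

lemma distMatrix_mulVec_balanceVec_apply_left (hdr : G.IsDistRegularWith D p) (hD : 2 ≤ D)
    (hdiam : ∀ x y, G.dist x y ≤ D) (f : ℕ → ℝ) (x y : V) (κ : ℝ) :
    (distMatrix G f *ᵥ balanceVec G x y κ) x =
      #(sphereInter G x y 1 2) * (f 1 - f 2) - κ * (f 0 - f (G.dist x y)) := by
  have hnear : ∀ a ∈ sphereInter G x y 1 2, f (G.dist x a) = f 1 := fun a ha ↦ by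
    rw [(mem_sphereInter.1 ha).1]
  have hfar : ∀ a ∈ sphereInter G y x 1 2, f (G.dist x a) = f 2 := fun a ha ↦ by
    rw [(mem_sphereInter.1 ha).2]
  rw [distMatrix_mulVec_balanceVec_apply, sum_congr rfl hnear, sum_congr rfl hfar, sum_const,
    sum_const, nsmul_eq_mul, nsmul_eq_mul, card_sphereInter_swap hdr hD hdiam, G.dist_self]
  ring

lemma distMatrix_mulVec_balanceVec_apply_of_mem (hconn : G.Connected) (htf : G.CliqueFree 3)
    (hdr : G.IsDistRegularWith D p) (hdiam : ∀ x y, G.dist x y ≤ D) (f : ℕ → ℝ) (κ : ℝ)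
    (hxy : 2 ≤ G.dist x y) (ha : a ∈ sphereInter G x y 1 2) :
    (distMatrix G f *ᵥ balanceVec G x y κ) a = f 0 - f 2 - (p 2 1 1 + κ) * (f 1 - f 2) +
      #{t ∈ sphereInter G y x 1 2 | G.dist a t = 3} * (f 2 - f 3) := by
  have hD : 2 ≤ D := hxy.trans (hdiam x y)
  have hnear := sum_dist_of_forall_dist_eq_one hconn htf f
    (fun z hz ↦ (mem_sphereInter.1 hz).1) ha
  have hcard := sum_dist_sphereInter hconn htf hdr hD 1 hxy ha
  simp only [Pi.one_apply, sum_const, nsmul_eq_mul, mul_one, card_sphereInter_swap hdr hD hdiam]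
    at hcard
  rw [distMatrix_mulVec_balanceVec_apply, hnear, sum_dist_sphereInter hconn htf hdr hD f hxy ha,
    G.dist_comm (u := a) (v := x), G.dist_comm (u := a) (v := y), (mem_sphereInter.1 ha).1,
    (mem_sphereInter.1 ha).2]
  linear_combination f 2 * hcard

lemma balanceVec_dotProduct_distMatrix_mulVec (hdr : G.IsDistRegularWith D p) (hD : 2 ≤ D)
    (hdiam : ∀ x y, G.dist x y ≤ D) {f : ℕ → ℝ}
    (hκ : κ * (f 0 - f (G.dist x y)) = #(sphereInter G x y 1 2) * (f 1 - f 2)) :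
    balanceVec G x y κ ⬝ᵥ distMatrix G f *ᵥ balanceVec G x y κ =
      ∑ a ∈ sphereInter G x y 1 2, (distMatrix G f *ᵥ balanceVec G x y κ) a +
        ∑ a ∈ sphereInter G y x 1 2, (distMatrix G f *ᵥ balanceVec G y x κ) a := by
  have hswap (v : V) : (distMatrix G f *ᵥ balanceVec G x y κ) v =
      -(distMatrix G f *ᵥ balanceVec G y x κ) v := by
    rw [balanceVec_swap x y, mulVec_neg, Pi.neg_apply, neg_neg]
  have hx : (distMatrix G f *ᵥ balanceVec G x y κ) x = 0 := by
    rw [distMatrix_mulVec_balanceVec_apply_left hdr hD hdiam, hκ, sub_self]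
  have hy : (distMatrix G f *ᵥ balanceVec G x y κ) y = 0 := by
    rw [hswap, distMatrix_mulVec_balanceVec_apply_left hdr hD hdiam, G.dist_comm, hκ,
      card_sphereInter_swap hdr hD hdiam, sub_self, neg_zero]
  rw [balanceVec_dotProduct, hx, hy, sub_self, mul_zero, sub_zero, sub_eq_add_neg,
    ← sum_neg_distrib]
  simp only [hswap, neg_neg]

end BalanceVec

namespace HasClassicalParams

variable {G : SimpleGraph V} {D : ℕ} {p : ℕ → ℕ → ℕ → ℕ} {b α β : ℝ} {v x y a t : V}

lemma distMatrix_mulVec_balanceVec_apply_of_dist_eq_three [Fintype V] [DecidableEq V]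
    (hcp : HasClassicalParams D p b α β) (hconn : G.Connected) (htf : G.CliqueFree 3)
    (hdr : G.IsDistRegularWith D p) (hdiam : ∀ x y, G.dist x y ≤ D) (hxy : G.dist x y = 3)
    (ha : a ∈ sphereInter G x y 1 2) :
    (distMatrix G (dualEigenvalue D b α β) *ᵥ balanceVec G x y (b * (1 + α * (1 + b)))) a =
      -(#{t ∈ sphereInter G y x 1 2 | G.dist a t = 2} *
        (dualEigenvalue D b α β 2 - dualEigenvalue D b α β 3)) := by
  have hD : 3 ≤ D := hxy ▸ hdiam x y
  have hcard := sum_dist_sphereInter hconn htf hdr (by omega) 1 (by omega) ha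
  simp only [Pi.one_apply, sum_const, nsmul_eq_mul, mul_one] at hcard
  rw [card_sphereInter hdr (G.dist_comm.trans hxy) hD (by omega) (by omega),
    hcp.intersectionNumber_c_two (by omega), hcp.intersectionNumber_c_three hD] at hcard
  rw [distMatrix_mulVec_balanceVec_apply_of_mem hconn htf hdr hdiam _ _ (by omega) ha,
    hcp.intersectionNumber_c_two (by omega), eq_sub_of_add_eq' hcard.symm]
  simp only [dualEigenvalue_sub_dualEigenvalue]
  have hb := hcp.1
  field_simp
  ring

theorem dist_ne_two_of_mem_Cset_of_mem_Cset [Finite V] (hcp : HasClassicalParams D p b α β)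
    (hconn : G.Connected) (htf : G.CliqueFree 3) (hdr : G.IsDistRegularWith D p)
    (hdiam : ∀ x y, G.dist x y ≤ D) (hb : b < 0) (hxy : G.dist x y = 3) (ha : a ∈ Cset G x y)
    (ht : t ∈ Cset G y x) : G.dist a t ≠ 2 := by
  classical
  have := Fintype.ofFinite V
  intro hat
  have hD : 3 ≤ D := hxy ▸ hdiam x y
  have hyx : G.dist y x = 3 := G.dist_comm.trans hxy
  replace ha : a ∈ sphereInter G x y 1 2 := mem_sphereInter.2 ⟨ha.1, by rw [ha.2, hxy]⟩
  replace ht : t ∈ sphereInter G y x 1 2 := mem_sphereInter.2 ⟨ht.1, by rw [ht.2, hyx]⟩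
  have hlt := hcp.dualEigenvalue_lt_dualEigenvalue (by omega) hb (by decide : Odd 3) even_two
  have hκ : b * (1 + α * (1 + b)) *
      (dualEigenvalue D b α β 0 - dualEigenvalue D b α β (G.dist x y)) =
      #(sphereInter G x y 1 2) * (dualEigenvalue D b α β 1 - dualEigenvalue D b α β 2) := by
    rw [card_sphereInter hdr hxy hD (by omega) (by omega), hcp.intersectionNumber_c_three hD, hxy,
      dualEigenvalue_sub_dualEigenvalue, dualEigenvalue_sub_dualEigenvalue]
    have hb₀ := hcp.1
    field_simp
    ring
  have hform := (hcp.posSemidef_distMatrix_dualEigenvalue (by omega) hconn hdr hdiam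
    hb).dotProduct_mulVec_nonneg (balanceVec G x y (b * (1 + α * (1 + b))))
  rw [star_trivial, balanceVec_dotProduct_distMatrix_mulVec hdr (by omega) hdiam hκ] at hform
  refine hform.not_gt (add_neg_of_neg_of_nonpos (sum_neg' (fun a' ha' ↦ ?_) ⟨a, ?_, ?_⟩)
    (sum_nonpos fun a' ha' ↦ ?_))
  · rw [hcp.distMatrix_mulVec_balanceVec_apply_of_dist_eq_three hconn htf hdr hdiam hxy ha']
    exact neg_nonpos.2 (mul_nonneg (Nat.cast_nonneg _) (sub_nonneg.2 hlt.le))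
  · exact ha
  · rw [hcp.distMatrix_mulVec_balanceVec_apply_of_dist_eq_three hconn htf hdr hdiam hxy ha]
    refine neg_neg_of_pos (mul_pos (Nat.cast_pos.2 (card_pos.2 ⟨t, ?_⟩)) (sub_pos.2 hlt))
    exact mem_filter.2 ⟨ht, hat⟩
  · rw [hcp.distMatrix_mulVec_balanceVec_apply_of_dist_eq_three hconn htf hdr hdiam hyx ha']
    exact neg_nonpos.2 (mul_nonneg (Nat.cast_nonneg _) (sub_nonneg.2 hlt.le))

lemma distMatrix_mulVec_balanceVec_apply_of_dist_eq_two [Fintype V] [DecidableEq V]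
    (hcp : HasClassicalParams D p b α β) (hconn : G.Connected) (htf : G.CliqueFree 3)
    (hdr : G.IsDistRegularWith D p) (hdiam : ∀ x y, G.dist x y ≤ D) (hb : b < 0)
    (hxy : G.dist x y = 2) (ha : a ∈ sphereInter G x y 1 2) :
    (distMatrix G (dualEigenvalue D b α β) *ᵥ balanceVec G x y (-α * (1 + b))) a = 0 := by
  have hD : 2 ≤ D := hxy ▸ hdiam x y
  have hempty : {t ∈ sphereInter G y x 1 2 | G.dist a t = 3} = ∅ := by
    refine filter_eq_empty_iff.2 fun t ht hat ↦ ?_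
    obtain ⟨hxa, hya⟩ := mem_sphereInter.1 ha
    obtain ⟨hyt, hxt⟩ := mem_sphereInter.1 ht
    have hx : x ∈ Cset G a t := ⟨G.dist_comm.trans hxa, by rw [hat, G.dist_comm, hxt]⟩
    have hy : y ∈ Cset G t a :=
      ⟨G.dist_comm.trans hyt, by rw [G.dist_comm (u := t), hat, G.dist_comm, hya]⟩
    exact hcp.dist_ne_two_of_mem_Cset_of_mem_Cset hconn htf hdr hdiam hb hat hx hy hxy
  rw [distMatrix_mulVec_balanceVec_apply_of_mem hconn htf hdr hdiam _ _ hxy.ge ha, hempty,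
    hcp.intersectionNumber_c_two hD]
  simp only [dualEigenvalue_sub_dualEigenvalue, card_empty, Nat.cast_zero, zero_mul, add_zero]
  have hb₀ := hcp.1
  field_simp
  ring

theorem distMatrix_mulVec_balanceVec_eq_zero [Fintype V] [DecidableEq V]
    (hcp : HasClassicalParams D p b α β) (hconn : G.Connected) (hdr : G.IsDistRegularWith D p)
    (hdiam : ∀ x y, G.dist x y ≤ D) (ha₁ : p 1 1 1 = 0) (hD : 2 < D) (hb : b < 0)
    (hxy : G.dist x y = 2) :
    distMatrix G (dualEigenvalue D b α β) *ᵥ balanceVec G x y (-α * (1 + b)) = 0 := by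
  have htf := cliqueFree_three_of_intersectionNumber_a_one_eq_zero hdr (by omega) ha₁
  have hκ : -α * (1 + b) * (dualEigenvalue D b α β 0 - dualEigenvalue D b α β (G.dist x y)) =
      #(sphereInter G x y 1 2) * (dualEigenvalue D b α β 1 - dualEigenvalue D b α β 2) := by
    rw [card_sphereInter hdr hxy hD.le (by omega) hD.le, hxy,
      hcp.intersectionNumber_a_two hdr ha₁ hD hxy, dualEigenvalue_sub_dualEigenvalue,
      dualEigenvalue_sub_dualEigenvalue]
    have hb₀ := hcp.1
    field_simp
    ring
  rw [← (hcp.posSemidef_distMatrix_dualEigenvalue (by omega) hconn hdr hdiam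
    hb).dotProduct_mulVec_zero_iff, star_trivial,
    balanceVec_dotProduct_distMatrix_mulVec hdr hD.le hdiam hκ]
  rw [sum_eq_zero, sum_eq_zero, add_zero]
  · exact fun a ↦ hcp.distMatrix_mulVec_balanceVec_apply_of_dist_eq_two hconn htf hdr hdiam hb
      (G.dist_comm.trans hxy)
  · exact fun a ↦ hcp.distMatrix_mulVec_balanceVec_apply_of_dist_eq_two hconn htf hdr hdiam hb hxy

lemma sum_dualEigenvalue_sub_sum_dualEigenvalue [Fintype V] (hcp : HasClassicalParams D p b α β)
    (hconn : G.Connected) (hdr : G.IsDistRegularWith D p) (hdiam : ∀ x y, G.dist x y ≤ D)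
    (ha₁ : p 1 1 1 = 0) (hb : b < 0) (hvx : G.dist v x = 2) (hxy : G.dist x y = 2)
    (hvy : G.dist v y = 4) :
    ∑ s ∈ sphereInter G x y 1 2, dualEigenvalue D b α β (G.dist v s) -
        ∑ t ∈ sphereInter G y x 1 2, dualEigenvalue D b α β (G.dist v t) =
      p 2 1 2 * (dualEigenvalue D b α β 3 - dualEigenvalue D b α β 4) := by
  classical
  have hD : 4 ≤ D := hvy ▸ hdiam v y
  have hκ : -α * (1 + b) * (dualEigenvalue D b α β 2 - dualEigenvalue D b α β 4) =
      p 2 1 2 * (dualEigenvalue D b α β 3 - dualEigenvalue D b α β 4) := by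
    rw [hcp.intersectionNumber_a_two hdr ha₁ (by omega) hxy, dualEigenvalue_sub_dualEigenvalue,
      dualEigenvalue_sub_dualEigenvalue]
    have hb₀ := hcp.1
    field_simp
    ring
  have hbalance := congrFun
    (hcp.distMatrix_mulVec_balanceVec_eq_zero hconn hdr hdiam ha₁ (by omega) hb hxy) v
  rw [distMatrix_mulVec_balanceVec_apply, hvx, hvy, hκ, Pi.zero_apply] at hbalance
  exact sub_eq_zero.1 hbalance

theorem dist_eq_four_of_mem_Aset [Finite V] (hcp : HasClassicalParams D p b α β)
    (hconn : G.Connected) (hdr : G.IsDistRegularWith D p) (hdiam : ∀ x y, G.dist x y ≤ D)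
    (ha₁ : p 1 1 1 = 0) (hvx : G.dist v x = 2) (hxy : G.dist x y = 2) (hvy : G.dist v y = 4)
    (ha : a ∈ Aset G y x) : G.dist v a = 4 := by
  have := Fintype.ofFinite V
  have hD : 4 ≤ D := hvy ▸ hdiam v y
  have hyx : G.dist y x = 2 := G.dist_comm.trans hxy
  replace ha : a ∈ sphereInter G y x 1 2 := mem_sphereInter.2 ⟨ha.1, by rw [ha.2, hyx]⟩
  have hcard_near : #(sphereInter G x y 1 2) = p 2 1 2 :=
    card_sphereInter hdr hxy (by omega) (by omega) (by omega)
  have hcard_far : #(sphereInter G y x 1 2) = p 2 1 2 :=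
    card_sphereInter hdr hyx (by omega) (by omega) (by omega)
  have hb := hcp.base_neg hconn hdr ha₁ (hcard_far ▸ card_ne_zero_of_mem ha) hD hvy
  have hlt {j : ℕ} : Even j → dualEigenvalue D b α β 3 < dualEigenvalue D b α β j :=
    hcp.dualEigenvalue_lt_dualEigenvalue (by omega) hb (by decide)
  have hgap : G.dist v y = G.dist v x + 2 := by omega
  have hnear {s : V} (hs : s ∈ sphereInter G x y 1 2) : G.dist v s = 2 ∨ G.dist v s = 3 := by
    simpa only [hvx] using dist_eq_or_eq_of_mem_sphereInter_near hconn hgap hs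
  have hfar {t : V} (ht : t ∈ sphereInter G y x 1 2) : G.dist v t = 3 ∨ G.dist v t = 4 := by
    simpa only [hvx] using dist_eq_or_eq_of_mem_sphereInter_far hconn hgap ht
  have hsum_near : p 2 1 2 * dualEigenvalue D b α β 3 ≤
      ∑ s ∈ sphereInter G x y 1 2, dualEigenvalue D b α β (G.dist v s) := by
    rw [← hcard_near, ← nsmul_eq_mul]
    refine card_nsmul_le_sum _ _ _ fun s hs ↦ ?_
    rcases hnear hs with hs | hs <;> rw [hs]
    exact (hlt even_two).le
  by_contra hva
  have hsum_far : ∑ t ∈ sphereInter G y x 1 2, dualEigenvalue D b α β (G.dist v t) <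
      p 2 1 2 * dualEigenvalue D b α β 4 := by
    rw [← hcard_far, ← nsmul_eq_mul, ← sum_const]
    refine sum_lt_sum (fun t ht ↦ ?_) ⟨a, ha, ?_⟩
    · rcases hfar ht with ht | ht <;> rw [ht]
      exact (hlt (by decide)).le
    · rw [(hfar ha).resolve_right hva]
      exact hlt (by decide)
  linarith [hcp.sum_dualEigenvalue_sub_sum_dualEigenvalue hconn hdr hdiam ha₁ hb hvx hxy hvy]

end HasClassicalParams

theorem pentagon_Bset_dist_ne_two_general [Finite V] (G : SimpleGraph V) (hconn : G.Connected)
    (D : ℕ) (hdiam_le : ∀ x y : V, G.dist x y ≤ D)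
    (_hdiam : ∃ x y : V, G.dist x y = D)
    (p : ℕ → ℕ → ℕ → ℕ) (hdr : G.IsDistRegularWith D p)
    (b α β : ℝ) (hcp : HasClassicalParams D p b α β) (ha1 : p 1 1 1 = 0)
    (x s t u z w : V)
    (hst : G.dist s t = 1) (htu : G.dist t u = 1) (huz : G.dist u z = 1)
    (hzw : G.dist z w = 1) (hws : G.dist w s = 1)
    (hu : G.dist x u = 3) (hz : G.dist x z = 2) :
    ∀ v ∈ Bset G x u, G.dist v s ≠ 2 := by
  rintro v ⟨hxv, huv⟩ hvs
  have hvu : G.dist v u = 4 := by rw [G.dist_comm, huv, hu]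
  have hsu : G.dist s u = 2 := by
    have hlower := hconn.dist_triangle (u := v) (v := s) (w := u)
    have hupper := hconn.dist_triangle (u := s) (v := t) (w := u)
    omega
  have hsz : G.dist s z = 2 := by
    have hD : 4 ≤ D := hvu ▸ hdiam_le v u
    refine dist_eq_two_of_dist_eq_one_of_dist_eq_one hconn
      (cliqueFree_three_of_intersectionNumber_a_one_eq_zero hdr (by omega) ha1) hws
      (G.dist_comm.trans hzw) ?_
    rintro rfl
    rw [G.dist_comm] at hsu
    omega
  have hvz : G.dist v z = 4 := hcp.dist_eq_four_of_mem_Aset hconn hdr hdiam_le ha1 hvs hsu hvu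
    ⟨huz, by rw [hsz, G.dist_comm, hsu]⟩
  have htri := hconn.dist_triangle (u := v) (v := x) (w := z)
  rw [G.dist_comm (u := v) (v := x)] at htri
  omega

/-- Classical parameters `(D, b, α, β)`, `D ≥ 4`, `a₁ = 0`, `a₂ ≠ 0`.
If `s t u z w` is a pentagon with `s, u ∈ Γ₃(x)` and `z ∈ Γ₂(x)`, then every
`v ∈ B(x,u)` satisfies `∂(v,s) ≠ 2`. -/
theorem pentagon_Bset_dist_ne_two [Fintype V] (G : SimpleGraph V) (hconn : G.Connected)
    (D : ℕ) (hD : 4 ≤ D)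
    (hdiam_le : ∀ x y : V, G.dist x y ≤ D) (hdiam : ∃ x y : V, G.dist x y = D)
    (p : ℕ → ℕ → ℕ → ℕ) (hdr : G.IsDistRegularWith D p)
    (b α β : ℝ) (hcp : HasClassicalParams D p b α β)
    (ha1 : p 1 1 1 = 0) (ha2 : p 2 1 2 ≠ 0)
    (x s t u z w : V)
    (hst : G.dist s t = 1) (htu : G.dist t u = 1) (huz : G.dist u z = 1)
    (hzw : G.dist z w = 1) (hws : G.dist w s = 1)
    (hs : G.dist x s = 3) (hu : G.dist x u = 3) (hz : G.dist x z = 2) :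
    ∀ v ∈ Bset G x u, G.dist v s ≠ 2 :=
  pentagon_Bset_dist_ne_two_general G hconn D hdiam_le hdiam p hdr b α β hcp ha1 x s t u z w hst htu
    huz hzw hws hu hz
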